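/- Let μ be a continuous non-negative function on [0,1], not identically zero, twice continuously differentiable, with μ(1) ≠ 0 and μ(α) ∼ a α^ν as α → 0⁺ for some a > 0, ν > 0, and let λ < 0. Suppose u : (0,∞) → ℝ is continuous and locally integrable, and its Laplace transform converges absolutely and satisfies ∫₀^∞ e^{−pt} u(t) dt = K(p)/(p K(p) − λ) for all real p > 0. Then u(t) ∼ C (log t)^{−1−ν} as t → ∞ with C = a Γ(1+ν)/(−λ); that is, lim_{t→∞} (log t)^{1+ν} · u(t) = a Γ(1+ν)/(−λ). -/

import Mathlib

open MeasureTheory Filter Set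

/-- `K(p) = ∫₀¹ p^{α-1} μ(α) dα` for real `p > 0`. -/
noncomputable def Kreal (μ : ℝ → ℝ) (p : ℝ) : ℝ :=
  ∫ α in (0:ℝ)..1, p ^ (α - 1) * μ α

/-- Complete monotonicity up to order `n` on `(0,∞)`. -/
def CMon : ℕ → (ℝ → ℝ) → Prop
  | 0, f => ∀ p : ℝ, 0 < p → 0 ≤ f p
  | n + 1, f => (∀ p : ℝ, 0 < p → 0 ≤ f p) ∧
      ∃ d : ℝ → ℝ, (∀ p : ℝ, 0 < p → HasDerivAt f (-(d p)) p) ∧ CMon n d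

theorem CMon.nonneg {n : ℕ} {f : ℝ → ℝ} (h : CMon n f) : ∀ p : ℝ, 0 < p → 0 ≤ f p := by
  cases n with
  | zero => exact h
  | succ n => exact h.1

theorem CMon.pred {n : ℕ} {f : ℝ → ℝ} (h : CMon (n + 1) f) : CMon n f := by
  induction n generalizing f with
  | zero => exact h.1
  | succ n ih =>
    obtain ⟨h0, d, hd, hc⟩ := h
    exact ⟨h0, d, hd, ih hc⟩

theorem CMon.congr {n : ℕ} {f g : ℝ → ℝ} (h : CMon n f) (hfg : ∀ p : ℝ, 0 < p → g p = f p) :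
    CMon n g := by
  cases n with
  | zero => intro p hp; rw [hfg p hp]; exact h p hp
  | succ n =>
    obtain ⟨h0, d, hd, hc⟩ := h
    refine ⟨fun p hp => by rw [hfg p hp]; exact h0 p hp, d, fun p hp => ?_, hc⟩
    refine (hd p hp).congr_of_eventuallyEq ?_
    filter_upwards [lt_mem_nhds hp] with q hq using hfg q hq

theorem CMon.add {n : ℕ} {f g : ℝ → ℝ} (hf : CMon n f) (hg : CMon n g) :
    CMon n (fun p => f p + g p) := by
  induction n generalizing f g with
  | zero => exact fun p hp => add_nonneg (hf p hp) (hg p hp)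
  | succ n ih =>
    obtain ⟨f0, d, hd, hc⟩ := hf
    obtain ⟨g0, e, he, hc'⟩ := hg
    refine ⟨fun p hp => add_nonneg (f0 p hp) (g0 p hp), fun p => d p + e p, fun p hp => ?_,
      ih hc hc'⟩
    refine ((hd p hp).add (he p hp)).congr_deriv ?_
    ring

theorem CMon.mul {n : ℕ} {f g : ℝ → ℝ} (hf : CMon n f) (hg : CMon n g) :
    CMon n (fun p => f p * g p) := by
  induction n generalizing f g with
  | zero => exact fun p hp => mul_nonneg (hf p hp) (hg p hp)
  | succ n ih =>
    have hf' := hf.pred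
    have hg' := hg.pred
    obtain ⟨f0, d, hd, hc⟩ := hf
    obtain ⟨g0, e, he, hc'⟩ := hg
    refine ⟨fun p hp => mul_nonneg (f0 p hp) (g0 p hp), fun p => d p * g p + f p * e p,
      fun p hp => ?_, (ih hc hg').add (ih hf' hc')⟩
    refine ((hd p hp).mul (he p hp)).congr_deriv ?_
    ring

theorem CMon.const {n : ℕ} {c : ℝ} (hc : 0 ≤ c) : CMon n (fun _ => c) := by
  induction n generalizing c with
  | zero => exact fun p hp => hc
  | succ n ih =>
    refine ⟨fun p hp => hc, fun _ => 0, fun p hp => ?_, ih le_rfl⟩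
    simpa using hasDerivAt_const p c

theorem CMon.diff {n : ℕ} {f : ℝ → ℝ} (hf : CMon (n + 1) f) {h : ℝ} (hh : 0 < h) :
    CMon n (fun p => f p - f (p + h)) := by
  have key : ∀ p : ℝ, 0 < p → 0 ≤ f p - f (p + h) := by
    intro p hp
    obtain ⟨h0, d, hd, hc⟩ := hf
    have : AntitoneOn f (Ioi 0) := by
      apply antitoneOn_of_deriv_nonpos (convex_Ioi 0)
      · exact fun x hx => (hd x hx).continuousAt.continuousWithinAt
      · rw [interior_Ioi]
        exact fun x hx => (hd x hx).differentiableAt.differentiableWithinAt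
      · rw [interior_Ioi]
        intro x hx
        rw [(hd x hx).deriv]
        have := hc.nonneg x hx
        linarith
    have := this (mem_Ioi.2 hp) (mem_Ioi.2 (by linarith : 0 < p + h)) (by linarith)
    linarith
  induction n generalizing f with
  | zero => exact key
  | succ n ih =>
    obtain ⟨h0, d, hd, hc⟩ := hf
    refine ⟨key, fun p => d p - d (p + h), fun p hp => ?_, ih hc ?_⟩
    · have h2 : HasDerivAt (fun p => f (p + h)) (-(d (p + h))) p :=
        (hd (p + h) (by linarith)).comp_add_const p h
      refine ((hd p hp).sub h2).congr_deriv ?_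
      ring
    · intro p hp
      obtain ⟨h0, d', hd', hc'⟩ := hc
      have : AntitoneOn d (Ioi 0) := by
        apply antitoneOn_of_deriv_nonpos (convex_Ioi 0)
        · exact fun x hx => (hd' x hx).continuousAt.continuousWithinAt
        · rw [interior_Ioi]
          exact fun x hx => (hd' x hx).differentiableAt.differentiableWithinAt
        · rw [interior_Ioi]
          intro x hx
          rw [(hd' x hx).deriv]
          have := hc'.nonneg x hx
          linarith
      have := this (mem_Ioi.2 hp) (mem_Ioi.2 (by linarith : 0 < p + h)) (by linarith)
      linarith

/-- Iterated (alternating) difference. -/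
def altDiff (h : ℝ) : ℕ → (ℝ → ℝ) → ℝ → ℝ
  | 0, f => f
  | n + 1, f => fun p => altDiff h n f p - altDiff h n f (p + h)

theorem altDiff_CMon {h : ℝ} (hh : 0 < h) (n k : ℕ) {f : ℝ → ℝ} (hf : CMon (k + n) f) :
    CMon k (altDiff h n f) := by
  induction n generalizing k with
  | zero => exact hf
  | succ n ih =>
    exact (ih (k + 1) (by rwa [Nat.add_right_comm])).diff hh

/-- Mixed power integrals. -/
noncomputable def Gint (w : ℝ → ℝ) (s p : ℝ) : ℝ := ∫ α in (0:ℝ)..1, p ^ (α - s) * w α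

theorem contOn_pow_mul {w : ℝ → ℝ} (hw : ContinuousOn w (Icc 0 1)) (s : ℝ) {p : ℝ} (hp : 0 < p) :
    ContinuousOn (fun α => p ^ (α - s) * w α) (Icc 0 1) := by
  refine ContinuousOn.mul ?_ hw
  apply Continuous.continuousOn
  exact Continuous.rpow (by fun_prop) (by fun_prop) (fun _ => Or.inl hp.ne')

theorem Gint_hasDerivAt {w : ℝ → ℝ} (hw : ContinuousOn w (Icc 0 1)) (s : ℝ) {p : ℝ}
    (hp : 0 < p) : HasDerivAt (Gint w s) (Gint (fun α => (α - s) * w α) (s + 1) p) p := by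
  have hw2 : ContinuousOn (fun α => (α - s) * w α) (Icc 0 1) := by fun_prop
  obtain ⟨C, hC⟩ := (isCompact_Icc.prod isCompact_Icc :
      IsCompact ((Icc (p/2) (2*p)) ×ˢ (Icc (0:ℝ) 1))).exists_bound_of_continuousOn
    (f := fun z : ℝ × ℝ => z.1 ^ (z.2 - (s+1)) * ((z.2 - s) * w z.2)) (by
      refine ContinuousOn.mul ?_ ?_
      · refine ContinuousOn.rpow (by fun_prop) (by fun_prop) ?_
        rintro ⟨x, y⟩ ⟨h1, h2⟩
        left
        have := h1.1
        simp only at this ⊢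
        linarith
      · exact hw2.comp continuousOn_snd (fun z hz => hz.2))
  have hs : Ioo (p/2) (2*p) ∈ nhds p := Ioo_mem_nhds (by linarith) (by linarith)
  have hIoc : uIoc (0:ℝ) 1 = Ioc 0 1 := uIoc_of_le zero_le_one
  refine (intervalIntegral.hasDerivAt_integral_of_dominated_loc_of_deriv_le
    (F := fun q α => q ^ (α - s) * w α)
    (F' := fun q α => q ^ (α - (s+1)) * ((α - s) * w α)) (bound := fun _ => C)
    hs ?_ ?_ ?_ ?_ ?_ ?_).2
  · filter_upwards [lt_mem_nhds hp] with q hq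
    rw [hIoc]
    exact ((contOn_pow_mul hw s hq).mono Ioc_subset_Icc_self).aestronglyMeasurable measurableSet_Ioc
  · exact ContinuousOn.intervalIntegrable (by rw [uIcc_of_le zero_le_one]; exact contOn_pow_mul hw s hp)
  · rw [hIoc]
    exact ((contOn_pow_mul hw2 (s+1) hp).mono Ioc_subset_Icc_self).aestronglyMeasurable
      measurableSet_Ioc
  · refine Eventually.of_forall fun α hα x hx => ?_
    rw [hIoc] at hα
    exact hC (x, α) ⟨⟨hx.1.le, hx.2.le⟩, Ioc_subset_Icc_self hα⟩
  · exact intervalIntegrable_const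
  · refine Eventually.of_forall fun α hα x hx => ?_
    have hx0 : x ≠ 0 := by have := hx.1; intro h; subst h; linarith
    have := (Real.hasDerivAt_rpow_const (x := x) (p := α - s) (Or.inl hx0)).mul_const (w α)
    refine this.congr_deriv ?_
    rw [show α - s - 1 = α - (s+1) by ring]
    ring

theorem Gint_neg (w : ℝ → ℝ) (s p : ℝ) : Gint (fun α => -(w α)) s p = -(Gint w s p) := by
  simp [Gint]

theorem Gint_CMon (n : ℕ) {w : ℝ → ℝ} (hw : ContinuousOn w (Icc 0 1))
    (h0 : ∀ α ∈ Icc (0:ℝ) 1, 0 ≤ w α) {s : ℝ} (hs : 1 ≤ s) : CMon n (Gint w s) := by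
  have nn : ∀ p : ℝ, 0 < p → 0 ≤ Gint w s p := by
    intro p hp
    exact intervalIntegral.integral_nonneg zero_le_one
      (fun α hα => mul_nonneg (Real.rpow_nonneg hp.le _) (h0 α hα))
  induction n generalizing w s with
  | zero => exact nn
  | succ n ih =>
    have hw2 : ContinuousOn (fun α => (s - α) * w α) (Icc 0 1) := by fun_prop
    have h02 : ∀ α ∈ Icc (0:ℝ) 1, 0 ≤ (s - α) * w α := fun α hα =>
      mul_nonneg (by linarith [hα.2]) (h0 α hα)
    refine ⟨nn, Gint (fun α => (s - α) * w α) (s + 1), fun p hp => ?_,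
      ih hw2 h02 (by linarith) ?_⟩
    · rw [← Gint_neg]
      convert Gint_hasDerivAt hw s hp using 3
      ring
    · intro p hp
      exact intervalIntegral.integral_nonneg zero_le_one
        (fun α hα => mul_nonneg (Real.rpow_nonneg hp.le _) (h02 α hα))

/-- If `B ≥ 0` has derivative completely monotone then `1/(c+B)` is completely monotone. -/
theorem inv_CMon {B B' : ℝ → ℝ} {c : ℝ} (hc : 0 < c) (hB0 : ∀ p : ℝ, 0 < p → 0 ≤ B p)
    (hB : ∀ p : ℝ, 0 < p → HasDerivAt B (B' p) p) (hB' : ∀ n, CMon n B') (n : ℕ) :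
    CMon n (fun p => (c + B p)⁻¹) := by
  have nn : ∀ p : ℝ, 0 < p → 0 ≤ (c + B p)⁻¹ := fun p hp => by
    have := hB0 p hp; positivity
  induction n with
  | zero => exact nn
  | succ n ih =>
    refine ⟨nn, fun p => B' p * ((c + B p)⁻¹ * (c + B p)⁻¹), fun p hp => ?_,
      (hB' n).mul (ih.mul ih)⟩
    have h := hB0 p hp
    have hne : c + B p ≠ 0 := by positivity
    have := ((hB p hp).const_add c).inv hne
    refine this.congr_deriv ?_
    field_simp

theorem image_exp_Ioi {p : ℝ} (hp : 0 < p) :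
    (fun t : ℝ => Real.exp (-p * t)) '' Ioi 0 = Ioo 0 1 := by
  ext x
  constructor
  · rintro ⟨t, ht, rfl⟩
    refine ⟨Real.exp_pos _, ?_⟩
    rw [Real.exp_lt_one_iff]
    have := mul_pos hp (mem_Ioi.1 ht)
    linarith
  · rintro ⟨h0, h1⟩
    refine ⟨-Real.log x / p, ?_, ?_⟩
    · exact div_pos (by linarith [Real.log_neg h0 h1]) hp
    · have : -p * (-Real.log x / p) = Real.log x := by field_simp
      simp only [this, Real.exp_log h0]

theorem deriv_exp_aux (p t : ℝ) (s : Set ℝ) :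
    HasDerivWithinAt (fun t : ℝ => Real.exp (-p * t)) (Real.exp (-p * t) * (-p)) s t := by
  have : HasDerivAt (fun t : ℝ => -p * t) (-p) t := by
    simpa using (hasDerivAt_id t).const_mul (-p)
  exact this.exp.hasDerivWithinAt

theorem inj_exp_aux {p : ℝ} (hp : 0 < p) (s : Set ℝ) :
    InjOn (fun t : ℝ => Real.exp (-p * t)) s := by
  intro x _ y _ h
  have := Real.exp_injective h
  exact mul_left_cancel₀ (by linarith : -p ≠ 0) this

theorem cv_fun_aux (u : ℝ → ℝ) {p : ℝ} (hp : 0 < p) (i : ℕ) (t : ℝ) :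
    |Real.exp (-p * t) * (-p)| • ((Real.exp (-p * t)) ^ i *
      u (-Real.log (Real.exp (-p * t)) / p)) = p * (Real.exp (-((i + 1) * p) * t) * u t) := by
  have h1 : -Real.log (Real.exp (-p * t)) / p = t := by
    rw [Real.log_exp]; field_simp
  rw [h1, abs_mul, abs_of_pos (Real.exp_pos _), abs_neg, abs_of_pos hp, ← Real.exp_nat_mul,
    smul_eq_mul]
  have : Real.exp (-((i + 1) * p) * t) = Real.exp (-p * t) * Real.exp (i * (-p * t)) := by
    rw [← Real.exp_add]; congr 1; ring
  rw [this]; ring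

theorem lap_cv (u : ℝ → ℝ) {p : ℝ} (hp : 0 < p)
    (hvi : IntegrableOn (fun t : ℝ => Real.exp (-p * t) * u t) (Ioi 0)) :
    IntegrableOn (fun x => u (-Real.log x / p)) (Ioo 0 1) := by
  rw [← image_exp_Ioi hp, integrableOn_image_iff_integrableOn_abs_deriv_smul measurableSet_Ioi
    (fun t _ => deriv_exp_aux p t _) (inj_exp_aux hp _)]
  have := cv_fun_aux u hp 0
  simp only [pow_zero, one_mul, Nat.cast_zero, zero_add] at this
  simp only [this]
  exact hvi.const_mul p

theorem lap_moment (u : ℝ → ℝ) {p : ℝ} (hp : 0 < p) (i : ℕ) :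
    ∫ x in Ioo (0:ℝ) 1, x ^ i * u (-Real.log x / p)
      = p * ∫ t in Ioi (0:ℝ), Real.exp (-((i + 1) * p) * t) * u t := by
  rw [← image_exp_Ioi hp, integral_image_eq_integral_abs_deriv_smul measurableSet_Ioi
    (fun t _ => deriv_exp_aux p t _) (inj_exp_aux hp _)]
  simp only [cv_fun_aux u hp i]
  rw [integral_const_mul]

theorem integrableOn_cont_mul {v f : ℝ → ℝ} (hv : IntegrableOn v (Ioo 0 1))
    (hf : Continuous f) : IntegrableOn (fun x => f x * v x) (Ioo 0 1) := by
  rw [← integrableOn_Icc_iff_integrableOn_Ioo] at *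
  exact hv.continuousOn_mul hf.continuousOn isCompact_Icc

theorem lap_beta {u F : ℝ → ℝ}
    (hF : ∀ p : ℝ, 0 < p → IntegrableOn (fun t : ℝ => Real.exp (-p * t) * u t) (Ioi 0) ∧
      ∫ t in Ioi (0:ℝ), Real.exp (-p * t) * u t = F p) {p : ℝ} (hp : 0 < p) (j m : ℕ) :
    ∫ x in Ioo (0:ℝ) 1, (x ^ m * (1 - x) ^ j) * u (-Real.log x / p)
      = p * altDiff p j F ((m + 1) * p) := by
  induction j generalizing m with
  | zero =>
    simp only [pow_zero, mul_one, altDiff]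
    rw [lap_moment u hp m, (hF ((m+1) * p) (by positivity)).2]
  | succ j ih =>
    have hv := lap_cv u hp (hF p hp).1
    have e : ∀ x : ℝ, (x ^ m * (1 - x) ^ (j+1)) * u (-Real.log x / p)
      = (x ^ m * (1 - x) ^ j) * u (-Real.log x / p)
        - (x ^ (m+1) * (1 - x) ^ j) * u (-Real.log x / p) := fun x => by ring
    simp only [e]
    rw [integral_sub (integrableOn_cont_mul hv (by fun_prop))
      (integrableOn_cont_mul hv (by fun_prop)), ih, ih]
    simp only [altDiff]
    rw [show ((m+1:ℕ) + 1 : ℝ) * p = (m + 1) * p + p by push_cast; ring]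
    ring

theorem altDiff_deriv {F D : ℝ → ℝ}
    (hD : ∀ q : ℝ, 0 < q → HasDerivAt (fun q => q * F q) (D q) q) {p : ℝ} (hp : 0 < p)
    (j m : ℕ) :
    HasDerivAt (fun p => p * altDiff p j F ((m + 1) * p)) (altDiff p j D ((m + 1) * p)) p := by
  induction j generalizing m with
  | zero =>
    simp only [altDiff]
    have hm : (0:ℝ) < m + 1 := by positivity
    have h1 : HasDerivAt (fun p : ℝ => ((m:ℝ) + 1) * p) (m + 1) p := by
      simpa using (hasDerivAt_id p).const_mul ((m:ℝ) + 1)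
    have h2 := ((hD ((m + 1) * p) (by positivity)).comp p h1).const_mul (((m:ℝ) + 1)⁻¹)
    have h3 : (fun p => p * F ((m + 1) * p)) =
        fun y => ((m:ℝ) + 1)⁻¹ * (((fun q => q * F q) ∘ fun p => ((m:ℝ) + 1) * p) y) := by
      funext y
      simp only [Function.comp]
      field_simp
    rw [h3]
    refine h2.congr_deriv ?_
    field_simp
  | succ j ih =>
    have h := (ih m).sub (ih (m+1))
    simp only [altDiff]
    have e : ∀ p : ℝ, ((m+1:ℕ) + 1 : ℝ) * p = (m + 1) * p + p := fun p => by push_cast; ring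
    simp only [e] at h
    refine (h.congr_deriv rfl).congr_of_eventuallyEq (Eventually.of_forall fun y => ?_)
    simp only [Pi.sub_apply]
    ring

theorem u_nonneg_antitone {u F D : ℝ → ℝ} (hu : ContinuousOn u (Ioi 0))
    (hF : ∀ p : ℝ, 0 < p → IntegrableOn (fun t : ℝ => Real.exp (-p * t) * u t) (Ioi 0) ∧
      ∫ t in Ioi (0:ℝ), Real.exp (-p * t) * u t = F p)
    (hFc : ∀ n, CMon n F)
    (hD : ∀ q : ℝ, 0 < q → HasDerivAt (fun q => q * F q) (D q) q)
    (hDc : ∀ n, CMon n D) :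
    (∀ t : ℝ, 0 < t → 0 ≤ u t) ∧ AntitoneOn u (Ioi 0) := by
  have hl2 : 0 < Real.log 2 := Real.log_pos (by norm_num)
  have hlog : -Real.log (1/2 : ℝ) = Real.log 2 := by
    rw [one_div, Real.log_inv, neg_neg]
  let c : ℕ → ℝ := fun n => (∫ x in Icc (0:ℝ) 1, (x * (1 - x)) ^ n)⁻¹
  have hc0 : ∀ n, 0 ≤ c n := fun n => by
    refine inv_nonneg.2 (setIntegral_nonneg measurableSet_Icc fun x hx => ?_)
    have := hx.1
    have := sub_nonneg.2 hx.2
    positivity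
  have key : ∀ t : ℝ, 0 < t → Tendsto (fun n : ℕ => c n * ((Real.log 2 / t) *
      altDiff (Real.log 2 / t) n F (((n:ℝ) + 1) * (Real.log 2 / t)))) atTop (nhds (u t)) := by
    intro t ht
    have hp : 0 < Real.log 2 / t := by positivity
    have ht' : -Real.log (1/2 : ℝ) / (Real.log 2 / t) = t := by
      rw [hlog]; field_simp
    have hv := lap_cv u hp (hF _ hp).1
    rw [← integrableOn_Icc_iff_integrableOn_Ioo] at hv
    have := tendsto_setIntegral_pow_smul_of_unique_maximum_of_isCompact_of_integrableOn
      (μ := volume) (s := Icc (0:ℝ) 1) (x₀ := 1/2) (c := fun x => x * (1 - x))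
      (g := fun x => u (-Real.log x / (Real.log 2 / t))) isCompact_Icc (by fun_prop)
      (fun y _ hy => by
        have : 0 < (y - 1/2)^2 := by
          have := sub_ne_zero.2 hy
          positivity
        show y * (1 - y) < 1/2 * (1 - 1/2)
        nlinarith)
      (fun x hx => mul_nonneg hx.1 (sub_nonneg.2 hx.2)) (by norm_num)
      (by
        rw [interior_Icc, closure_Ioo (by norm_num)]
        constructor <;> norm_num) hv
      (by
        apply ContinuousAt.continuousWithinAt
        have h1 : ContinuousAt u (-Real.log (1/2) / (Real.log 2 / t)) := by
          rw [ht']; exact hu.continuousAt (Ioi_mem_nhds ht)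
        refine ContinuousAt.comp (f := fun x : ℝ => -Real.log x / (Real.log 2 / t)) h1 ?_
        exact ((Real.continuousAt_log (by norm_num)).neg).div_const _)
    simp only [ht'] at this
    refine this.congr fun n => ?_
    rw [← lap_beta hF hp n n, integral_Icc_eq_integral_Ioo (f := fun x => (x * (1 - x)) ^ n •
      u (-Real.log x / (Real.log 2 / t)))]
    simp only [c, smul_eq_mul, mul_pow]
  constructor
  · intro t ht
    refine ge_of_tendsto (key t ht) (Eventually.of_forall fun n => ?_)
    have hp : 0 < Real.log 2 / t := by positivity
    have := (altDiff_CMon hp n 0 (hFc _)).nonneg (((n:ℝ) + 1) * (Real.log 2 / t)) (by positivity)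
    have := hc0 n
    positivity
  · intro s hs t ht hst
    have hs : 0 < s := hs
    have ht : 0 < t := ht
    refine le_of_tendsto_of_tendsto (key t ht) (key s hs) (Eventually.of_forall fun n => ?_)
    refine mul_le_mul_of_nonneg_left ?_ (hc0 n)
    have hm : MonotoneOn (fun p => p * altDiff p n F (((n:ℝ) + 1) * p)) (Ioi 0) := by
      apply monotoneOn_of_deriv_nonneg (convex_Ioi 0)
      · exact fun x hx => (altDiff_deriv hD hx n n).continuousAt.continuousWithinAt
      · rw [interior_Ioi]
        exact fun x hx => (altDiff_deriv hD hx n n).differentiableAt.differentiableWithinAt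
      · rw [interior_Ioi]
        intro x hx
        rw [(altDiff_deriv hD hx n n).deriv]
        have hx : 0 < x := hx
        exact (altDiff_CMon hx n 0 (hDc _)).nonneg _ (by positivity)
    exact hm (mem_Ioi.2 (by positivity)) (mem_Ioi.2 (by positivity))
      (div_le_div_of_nonneg_left hl2.le hs hst)

theorem mu_bound {μ : ℝ → ℝ} (hc : ContinuousOn μ (Icc 0 1)) {a ν : ℝ} (ha : 0 < a) (hν : 0 < ν)
    (hasymp : Tendsto (fun α : ℝ => μ α / (a * α ^ ν)) (nhdsWithin 0 (Ioi 0)) (nhds 1)) :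
    ∃ M : ℝ, ∀ α ∈ Ioc (0:ℝ) 1, |μ α| ≤ M * α ^ ν := by
  obtain ⟨S, hS⟩ := isCompact_Icc.exists_bound_of_continuousOn hc
  have h2 : ∀ᶠ α in nhdsWithin (0:ℝ) (Ioi 0), |μ α / (a * α ^ ν)| < 2 := by
    have := hasymp.abs
    rw [abs_one] at this
    exact this.eventually (gt_mem_nhds (by norm_num))
  rw [eventually_nhdsWithin_iff, Metric.eventually_nhds_iff] at h2
  obtain ⟨δ, hδ, h2⟩ := h2
  have hS0 : 0 ≤ S := (norm_nonneg _).trans (hS 0 (by simp))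
  have hδν : 0 < δ ^ ν := Real.rpow_pos_of_pos hδ ν
  refine ⟨2 * a + S / δ ^ ν, fun α hα => ?_⟩
  have hαν : 0 < α ^ ν := Real.rpow_pos_of_pos hα.1 ν
  rcases lt_or_ge α δ with h | h
  · have := h2 (y := α) (by rw [Real.dist_eq, sub_zero, abs_of_pos hα.1]; exact h) hα.1
    rw [abs_div, abs_of_pos (mul_pos ha hαν), div_lt_iff₀ (mul_pos ha hαν)] at this
    have : 0 ≤ S / δ ^ ν * α ^ ν := by positivity
    nlinarith
  · have h3 := hS α (Ioc_subset_Icc_self hα)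
    rw [Real.norm_eq_abs] at h3
    have h4 : δ ^ ν ≤ α ^ ν := Real.rpow_le_rpow hδ.le h hν.le
    have h5 : S ≤ S / δ ^ ν * α ^ ν := by
      rw [div_mul_eq_mul_div, le_div_iff₀ hδν]
      exact mul_le_mul_of_nonneg_left h4 hS0
    have : 0 ≤ 2 * a * α ^ ν := by positivity
    nlinarith

theorem watson {μ : ℝ → ℝ} (hc : ContinuousOn μ (Icc 0 1)) {a ν : ℝ} (ha : 0 < a) (hν : 0 < ν)
    (hasymp : Tendsto (fun α : ℝ => μ α / (a * α ^ ν)) (nhdsWithin 0 (Ioi 0)) (nhds 1)) :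
    Tendsto (fun l : ℝ => l ^ (1 + ν) * ∫ α in (0:ℝ)..1, Real.exp (-(l * α)) * μ α) atTop
      (nhds (a * Real.Gamma (1 + ν))) := by
  obtain ⟨M, hM⟩ := mu_bound hc ha hν hasymp
  have hM0 : 0 ≤ M := by
    have := (abs_nonneg _).trans (hM 1 (by simp))
    simpa using this
  let m : ℝ → ℝ := (Ioc (0:ℝ) 1).indicator μ
  have hmm : AEStronglyMeasurable m volume := by
    rw [aestronglyMeasurable_indicator_iff measurableSet_Ioc]
    exact (hc.mono Ioc_subset_Icc_self).aestronglyMeasurable measurableSet_Ioc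
  have hmb : ∀ α : ℝ, 0 < α → |m α| ≤ M * α ^ ν := by
    intro α hα
    by_cases h : α ∈ Ioc (0:ℝ) 1
    · simp only [m, indicator_of_mem h]; exact hM α h
    · simp only [m, indicator_of_notMem h, abs_zero]
      have := Real.rpow_nonneg hα.le ν
      positivity
  have hΓ : ∫ s in Ioi (0:ℝ), a * (Real.exp (-s) * s ^ ν) = a * Real.Gamma (1 + ν) := by
    rw [integral_const_mul, Real.Gamma_eq_integral (by linarith)]
    simp
  have hΓi : IntegrableOn (fun s : ℝ => Real.exp (-s) * s ^ ν) (Ioi 0) := by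
    have := Real.GammaIntegral_convergent (s := 1 + ν) (by linarith)
    simpa using this
  have hD : Tendsto (fun l : ℝ => ∫ s in Ioi (0:ℝ), Real.exp (-s) * (l ^ ν * m (s / l))) atTop
      (nhds (∫ s in Ioi (0:ℝ), a * (Real.exp (-s) * s ^ ν))) := by
    apply tendsto_integral_filter_of_dominated_convergence
      (fun s => M * (Real.exp (-s) * s ^ ν))
    · filter_upwards [eventually_gt_atTop 0] with l hl
      apply AEStronglyMeasurable.mul
      · exact Continuous.aestronglyMeasurable (by fun_prop)
      · apply AEStronglyMeasurable.const_mul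
        apply AEStronglyMeasurable.restrict
        refine hmm.comp_quasiMeasurePreserving (f := fun s : ℝ => s / l) ?_
        refine ⟨by fun_prop, ?_⟩
        have : (fun s : ℝ => s / l) = fun s => s * l⁻¹ := by funext s; rw [div_eq_mul_inv]
        rw [this, Real.map_volume_mul_right (inv_ne_zero hl.ne')]
        exact Measure.smul_absolutelyContinuous
    · filter_upwards [eventually_gt_atTop 0] with l hl
      refine (ae_restrict_iff' measurableSet_Ioi).2 (Eventually.of_forall fun s hs => ?_)
      have hs : 0 < s := hs
      have hlν : 0 < l ^ ν := Real.rpow_pos_of_pos hl ν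
      rw [Real.norm_eq_abs, abs_mul, abs_mul, abs_of_pos (Real.exp_pos _), abs_of_pos hlν]
      have h1 := hmb (s / l) (by positivity)
      rw [Real.div_rpow hs.le hl.le] at h1
      calc Real.exp (-s) * (l ^ ν * |m (s / l)|)
          ≤ Real.exp (-s) * (l ^ ν * (M * (s ^ ν / l ^ ν))) := by gcongr
        _ = M * (Real.exp (-s) * s ^ ν) := by field_simp
    · exact hΓi.const_mul M
    · refine (ae_restrict_iff' measurableSet_Ioi).2 (Eventually.of_forall fun s hs => ?_)
      have hs : 0 < s := hs
      have h1 : Tendsto (fun l : ℝ => s / l) atTop (nhdsWithin 0 (Ioi 0)) := by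
        rw [tendsto_nhdsWithin_iff]
        refine ⟨tendsto_const_nhds.div_atTop tendsto_id, ?_⟩
        filter_upwards [eventually_gt_atTop 0] with l hl
        exact div_pos hs hl
      have h2 := (hasymp.comp h1).mul_const (a * (Real.exp (-s) * s ^ ν))
      rw [one_mul] at h2
      refine h2.congr' ?_
      filter_upwards [eventually_gt_atTop 0, eventually_ge_atTop s] with l hl hls
      have hmem : s / l ∈ Ioc (0:ℝ) 1 := ⟨by positivity, (div_le_one hl).2 hls⟩
      have hlν : 0 < l ^ ν := Real.rpow_pos_of_pos hl ν
      have hsν : 0 < s ^ ν := Real.rpow_pos_of_pos hs ν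
      simp only [m, indicator_of_mem hmem, Function.comp, Real.div_rpow hs.le hl.le]
      field_simp
  rw [hΓ] at hD
  refine hD.congr' ?_
  filter_upwards [eventually_gt_atTop 0] with l hl
  have h1 := integral_comp_mul_left_Ioi (fun s => Real.exp (-s) * m (s / l)) 0 hl
  rw [mul_zero] at h1
  have h2 : ∫ α in (0:ℝ)..1, Real.exp (-(l * α)) * μ α
      = ∫ x in Ioi (0:ℝ), Real.exp (-(l * x)) * m (l * x / l) := by
    rw [intervalIntegral.integral_of_le zero_le_one]
    have e : ∀ x, Real.exp (-(l * x)) * m (l * x / l) =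
        (Ioc (0:ℝ) 1).indicator (fun α => Real.exp (-(l * α)) * μ α) x := by
      intro x
      rw [mul_div_cancel_left₀ x hl.ne']
      by_cases h : x ∈ Ioc (0:ℝ) 1
      · simp only [m, indicator_of_mem h]
      · simp only [m, indicator_of_notMem h, mul_zero]
    simp only [e]
    rw [setIntegral_indicator measurableSet_Ioc]
    congr 2
    ext x
    simp only [mem_Ioc, mem_inter_iff, mem_Ioi]
    tauto
  rw [h2, h1, smul_eq_mul, Real.rpow_add hl, Real.rpow_one]
  have h3 : ∀ s, Real.exp (-s) * (l ^ ν * m (s / l)) = l ^ ν * (Real.exp (-s) * m (s / l)) :=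
    fun s => by ring
  simp only [h3]
  rw [integral_const_mul]
  field_simp

theorem taub_poly {ι : Type*} {l : Filter ι} {v : ι → ℝ → ℝ} {C : ℝ}
    (hvi : ∀ᶠ t in l, IntegrableOn (v t) (Ioo 0 1))
    (hmom : ∀ i : ℕ, Tendsto (fun t => ∫ x in Ioo (0:ℝ) 1, x ^ i * v t x) l
      (nhds (C * (1 / ((i:ℝ) + 1))))) (P : Polynomial ℝ) :
    Tendsto (fun t => ∫ x in Ioo (0:ℝ) 1, P.eval x * v t x) l
      (nhds (C * ∫ x in Ioo (0:ℝ) 1, P.eval x)) := by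
  have hone : IntegrableOn (fun _ : ℝ => (1:ℝ)) (Ioo 0 1) := by
    simp
  have hP1 : ∀ P : Polynomial ℝ, IntegrableOn (fun x => P.eval x) (Ioo 0 1) := fun P => by
    simpa using integrableOn_cont_mul hone P.continuous
  induction P using Polynomial.induction_on' with
  | add P Q hP hQ =>
    have h := hP.add hQ
    simp only [Polynomial.eval_add]
    rw [integral_add (hP1 P) (hP1 Q), mul_add]
    refine h.congr' ?_
    filter_upwards [hvi] with t ht
    simp only [add_mul]
    rw [integral_add (integrableOn_cont_mul ht P.continuous)
      (integrableOn_cont_mul ht Q.continuous)]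
  | monomial i c =>
    have h := (hmom i).const_mul c
    have e : ∫ x in Ioo (0:ℝ) 1, x ^ i = 1 / ((i:ℝ) + 1) := by
      rw [← integral_Ioc_eq_integral_Ioo, ← intervalIntegral.integral_of_le zero_le_one,
        integral_pow]
      simp
    simp only [Polynomial.eval_monomial]
    rw [integral_const_mul, e]
    simp only [mul_assoc, integral_const_mul]
    convert h using 2
    ring

theorem taub_cont {ι : Type*} {l : Filter ι} {v : ι → ℝ → ℝ} {C : ℝ}
    (hvi : ∀ᶠ t in l, IntegrableOn (v t) (Ioo 0 1))
    (hnn : ∀ᶠ t in l, ∀ x ∈ Ioo (0:ℝ) 1, 0 ≤ v t x)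
    (hmom : ∀ i : ℕ, Tendsto (fun t => ∫ x in Ioo (0:ℝ) 1, x ^ i * v t x) l
      (nhds (C * (1 / ((i:ℝ) + 1))))) {f : ℝ → ℝ} (hf : Continuous f) :
    Tendsto (fun t => ∫ x in Ioo (0:ℝ) 1, f x * v t x) l
      (nhds (C * ∫ x in Ioo (0:ℝ) 1, f x)) := by
  have hone : IntegrableOn (fun _ : ℝ => (1:ℝ)) (Ioo 0 1) := by
    simp
  have hf1 : ∀ f : ℝ → ℝ, Continuous f → IntegrableOn f (Ioo 0 1) := fun f hf => by
    simpa using integrableOn_cont_mul hone hf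
  have h0 := hmom 0
  simp only [pow_zero, one_mul, Nat.cast_zero, zero_add, div_one, mul_one] at h0
  rw [Metric.tendsto_nhds]
  intro ε hε
  set η : ℝ := ε / (2 * (2 * |C| + 2)) with hη
  have hη0 : 0 < η := by positivity
  obtain ⟨P, hP⟩ := exists_polynomial_near_of_continuousOn 0 1 f hf.continuousOn η hη0
  have hPt := taub_poly hvi hmom P
  rw [Metric.tendsto_nhds] at hPt
  have hb : ∀ᶠ t in l, ∫ x in Ioo (0:ℝ) 1, v t x < |C| + 1 :=
    h0.eventually (gt_mem_nhds (by linarith [le_abs_self C]))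
  filter_upwards [hvi, hnn, hPt (ε/2) (by positivity), hb] with t ht hn hp hbt
  rw [Real.dist_eq] at hp ⊢
  have e1 : |(∫ x in Ioo (0:ℝ) 1, f x * v t x) - ∫ x in Ioo (0:ℝ) 1, P.eval x * v t x|
      ≤ η * (|C| + 1) := by
    rw [← integral_sub (integrableOn_cont_mul ht hf) (integrableOn_cont_mul ht P.continuous),
      ← Real.norm_eq_abs]
    calc _ ≤ ∫ x in Ioo (0:ℝ) 1, η * v t x := by
          refine norm_integral_le_of_norm_le (ht.const_mul η) ?_
          refine (ae_restrict_iff' measurableSet_Ioo).2 (Eventually.of_forall fun x hx => ?_)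
          rw [← sub_mul, norm_mul, Real.norm_eq_abs, Real.norm_eq_abs, abs_of_nonneg (hn x hx),
            abs_sub_comm]
          exact mul_le_mul_of_nonneg_right (hP x (Ioo_subset_Icc_self hx)).le (hn x hx)
      _ = η * ∫ x in Ioo (0:ℝ) 1, v t x := integral_const_mul _ _
      _ ≤ _ := by gcongr
  have e2 : |(∫ x in Ioo (0:ℝ) 1, P.eval x) - ∫ x in Ioo (0:ℝ) 1, f x| ≤ η := by
    rw [← integral_sub (hf1 _ P.continuous) (hf1 f hf), ← Real.norm_eq_abs]
    calc _ ≤ ∫ x in Ioo (0:ℝ) 1, η := by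
          refine norm_integral_le_of_norm_le (hf1 _ continuous_const) ?_
          refine (ae_restrict_iff' measurableSet_Ioo).2 (Eventually.of_forall fun x hx => ?_)
          exact (hP x (Ioo_subset_Icc_self hx)).le
      _ = η := by simp
  have e3 : |C * (∫ x in Ioo (0:ℝ) 1, P.eval x) - C * ∫ x in Ioo (0:ℝ) 1, f x| ≤ |C| * η := by
    rw [← mul_sub, abs_mul]
    gcongr
  have e4 : η * (|C| + 1) + |C| * η < ε / 2 := by
    have : η * (2 * |C| + 2) = ε / 2 := by
      rw [hη]; field_simp
    nlinarith
  have t1 := abs_sub_le (∫ x in Ioo (0:ℝ) 1, f x * v t x) (∫ x in Ioo (0:ℝ) 1, P.eval x * v t x)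
    (C * ∫ x in Ioo (0:ℝ) 1, f x)
  have t2 := abs_sub_le (∫ x in Ioo (0:ℝ) 1, P.eval x * v t x)
    (C * ∫ x in Ioo (0:ℝ) 1, P.eval x) (C * ∫ x in Ioo (0:ℝ) 1, f x)
  linarith

theorem taub {ι : Type*} {l : Filter ι} {v : ι → ℝ → ℝ} {C : ℝ}
    (hvi : ∀ᶠ t in l, IntegrableOn (v t) (Ioo 0 1))
    (hnn : ∀ᶠ t in l, ∀ x ∈ Ioo (0:ℝ) 1, 0 ≤ v t x)
    (hmono : ∀ᶠ t in l, MonotoneOn (v t) (Ioo 0 1))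
    (hmom : ∀ i : ℕ, Tendsto (fun t => ∫ x in Ioo (0:ℝ) 1, x ^ i * v t x) l
      (nhds (C * (1 / ((i:ℝ) + 1))))) :
    Tendsto (fun t => v t (1/2)) l (nhds C) := by
  have hone : IntegrableOn (fun _ : ℝ => (1:ℝ)) (Ioo 0 1) := by
    simp
  have hf1 : ∀ f : ℝ → ℝ, Continuous f → IntegrableOn f (Ioo 0 1) := fun f hf => by
    simpa using integrableOn_cont_mul hone hf
  have pos : ∀ f : ℝ → ℝ, Continuous f → (∀ x, 0 ≤ f x) → (∃ x ∈ Ioo (0:ℝ) 1, f x ≠ 0) →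
      0 < ∫ x in Ioo (0:ℝ) 1, f x := by
    rintro f hf h0 ⟨x, hx, hx0⟩
    rw [setIntegral_pos_iff_support_of_nonneg_ae (Eventually.of_forall h0) (hf1 f hf)]
    have ho : IsOpen (Function.support f ∩ Ioo 0 1) := (hf.isOpen_support).inter isOpen_Ioo
    exact ho.measure_pos _ ⟨x, hx0, hx⟩
  have half : (1/2 : ℝ) ∈ Ioo (0:ℝ) 1 := by constructor <;> norm_num
  let f : ℝ → ℝ := fun x => max 0 (x - 1/2)
  let g : ℝ → ℝ := fun x => max 0 (1/2 - x)
  have hf : Continuous f := by fun_prop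
  have hg : Continuous g := by fun_prop
  have hf0 : ∀ x, 0 ≤ f x := fun x => le_max_left _ _
  have hg0 : ∀ x, 0 ≤ g x := fun x => le_max_left _ _
  have If := pos f hf hf0 ⟨3/4, by constructor <;> norm_num, by norm_num [f]⟩
  have Ig := pos g hg hg0 ⟨1/4, by constructor <;> norm_num, by norm_num [g]⟩
  have lf := (taub_cont hvi hnn hmom hf).div_const (∫ x in Ioo (0:ℝ) 1, f x)
  have lg := (taub_cont hvi hnn hmom hg).div_const (∫ x in Ioo (0:ℝ) 1, g x)
  rw [mul_div_cancel_right₀ _ If.ne'] at lf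
  rw [mul_div_cancel_right₀ _ Ig.ne'] at lg
  refine tendsto_of_tendsto_of_tendsto_of_le_of_le' lg lf ?_ ?_
  · filter_upwards [hvi, hmono] with t ht hm
    rw [div_le_iff₀ Ig, ← integral_const_mul]
    refine setIntegral_mono_on (integrableOn_cont_mul ht hg) ((hf1 g hg).const_mul _)
      measurableSet_Ioo fun x hx => ?_
    rw [mul_comm]
    rcases le_total x (1/2) with h | h
    · exact mul_le_mul_of_nonneg_right (hm hx half h) (hg0 x)
    · have : g x = 0 := max_eq_left (by linarith)
      simp [this]
  · filter_upwards [hvi, hmono] with t ht hm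
    rw [le_div_iff₀ If, ← integral_const_mul]
    refine setIntegral_mono_on ((hf1 f hf).const_mul _) (integrableOn_cont_mul ht hf)
      measurableSet_Ioo fun x hx => ?_
    rw [mul_comm (f x)]
    rcases le_total x (1/2) with h | h
    · have : f x = 0 := max_eq_left (by linarith)
      simp [this]
    · exact mul_le_mul_of_nonneg_right (hm half hx h) (hf0 x)

/-- If `q F(q) (log 1/q)^(1+ν) → C` then the same with an extra scaling. -/
theorem log_scale (k : ℝ) (hk : 0 < k) (ν : ℝ) :
    Tendsto (fun l : ℝ => (l / (l - Real.log k)) ^ (1 + ν)) atTop (nhds 1) := by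
  have h1 : Tendsto (fun l : ℝ => l / (l - Real.log k)) atTop (nhds 1) := by
    have h2 : Tendsto (fun l : ℝ => 1 + Real.log k / (l - Real.log k)) atTop (nhds (1 + 0)) :=
      tendsto_const_nhds.add (tendsto_const_nhds.div_atTop
        (tendsto_atTop_add_const_right _ _ tendsto_id))
    rw [add_zero] at h2
    refine h2.congr' ?_
    filter_upwards [eventually_gt_atTop (Real.log k)] with l hl
    have : l - Real.log k ≠ 0 := by linarith
    field_simp
    ring
  have := h1.rpow_const (p := 1 + ν) (Or.inl one_ne_zero)
  simpa using this

theorem main_taub {u F : ℝ → ℝ} {ν C : ℝ} (hν : 0 < ν)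
    (hF : ∀ p : ℝ, 0 < p → IntegrableOn (fun t : ℝ => Real.exp (-p * t) * u t) (Ioi 0) ∧
      ∫ t in Ioi (0:ℝ), Real.exp (-p * t) * u t = F p)
    (hu0 : ∀ t : ℝ, 0 < t → 0 ≤ u t) (hua : AntitoneOn u (Ioi 0))
    (hFa : Tendsto (fun l : ℝ => l ^ (1 + ν) * (Real.exp (-l) * F (Real.exp (-l)))) atTop (nhds C)) :
    Tendsto (fun t : ℝ => (Real.log t) ^ (1 + ν) * u t) atTop (nhds C) := by
  have hmomT : ∀ i : ℕ, Tendsto (fun l : ℝ => ∫ x in Ioo (0:ℝ) 1,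
      x ^ i * (l ^ (1 + ν) * u (-Real.log x / Real.exp (-l)))) atTop
      (nhds (C * (1 / ((i:ℝ) + 1)))) := by
    intro i
    have hi : (0:ℝ) < i + 1 := by positivity
    have h1 : Tendsto (fun l : ℝ => l - Real.log (i + 1)) atTop atTop :=
      tendsto_atTop_add_const_right _ _ tendsto_id
    have h2 := ((hFa.comp h1).mul (log_scale (i + 1) hi ν)).mul_const (1 / ((i:ℝ) + 1))
    rw [mul_one] at h2
    refine h2.congr' ?_
    filter_upwards [eventually_gt_atTop 0, eventually_gt_atTop (Real.log (i + 1))] with l hl0 hl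
    have e : ∀ x : ℝ, x ^ i * (l ^ (1 + ν) * u (-Real.log x / Real.exp (-l)))
        = l ^ (1 + ν) * (x ^ i * u (-Real.log x / Real.exp (-l))) := fun x => by ring
    simp only [e]
    rw [integral_const_mul, lap_moment u (Real.exp_pos _) i,
      (hF ((i + 1) * Real.exp (-l)) (by positivity)).2]
    have e2 : Real.exp (-(l - Real.log (i + 1))) = (i + 1) * Real.exp (-l) := by
      rw [neg_sub, sub_eq_add_neg, Real.exp_add, Real.exp_log hi]
    have hl' : 0 < l - Real.log (i + 1) := by linarith
    have hp := Real.rpow_pos_of_pos hl' (1 + ν)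
    simp only [Function.comp, e2, Real.div_rpow hl0.le hl'.le]
    field_simp
  have hmain := taub (v := fun l x => l ^ (1 + ν) * u (-Real.log x / Real.exp (-l)))
    (l := atTop) (C := C)
    (Eventually.of_forall fun l => (lap_cv u (Real.exp_pos _) (hF _ (Real.exp_pos _)).1).const_mul _)
    (by
      filter_upwards [eventually_gt_atTop 0] with l hl x hx
      have := Real.rpow_pos_of_pos hl (1 + ν)
      have h2 := Real.log_neg hx.1 hx.2
      have := hu0 (-Real.log x / Real.exp (-l)) (div_pos (by linarith) (Real.exp_pos _))
      positivity)
    (by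
      filter_upwards [eventually_gt_atTop 0] with l hl x hx y hy hxy
      have := Real.rpow_pos_of_pos hl (1 + ν)
      have h2 := Real.log_neg hx.1 hx.2
      have h3 := Real.log_neg hy.1 hy.2
      have h4 := Real.log_le_log hx.1 hxy
      refine mul_le_mul_of_nonneg_left (hua ?_ ?_ ?_) this.le
      · exact div_pos (by linarith) (Real.exp_pos _)
      · exact div_pos (by linarith) (Real.exp_pos _)
      · gcongr)
    hmomT
  have hl2 : 0 < Real.log 2 := Real.log_pos (by norm_num)
  have hlog : -Real.log (1/2 : ℝ) = Real.log 2 := by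
    rw [one_div, Real.log_inv, neg_neg]
  simp only [hlog] at hmain
  have h1 : Tendsto (fun t : ℝ => Real.log t - Real.log (Real.log 2)) atTop atTop :=
    tendsto_atTop_add_const_right _ _ Real.tendsto_log_atTop
  have h2 := (hmain.comp h1).mul ((log_scale (Real.log 2) hl2 ν).comp Real.tendsto_log_atTop)
  rw [mul_one] at h2
  refine h2.congr' ?_
  filter_upwards [eventually_gt_atTop 1, Real.tendsto_log_atTop.eventually_gt_atTop
    (Real.log (Real.log 2))] with t ht ht2
  have ht0 : 0 < t := by linarith
  have hlt : 0 < Real.log t := Real.log_pos ht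
  have hl' : 0 < Real.log t - Real.log (Real.log 2) := by linarith
  have hp := Real.rpow_pos_of_pos hl' (1 + ν)
  have e2 : Real.log 2 / Real.exp (-(Real.log t - Real.log (Real.log 2))) = t := by
    rw [neg_sub, Real.exp_sub, Real.exp_log hl2, Real.exp_log ht0]
    field_simp
  simp only [Function.comp, e2, Real.div_rpow hlt.le hl'.le]
  field_simp

theorem relaxation_solution_log_decay_power_weight (μ : ℝ → ℝ)
    (hc : ContinuousOn μ (Set.Icc 0 1))
    (hnn : ∀ α ∈ Set.Icc (0:ℝ) 1, 0 ≤ μ α)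
    (hne : ∃ α ∈ Set.Icc (0:ℝ) 1, μ α ≠ 0)
    (hC2 : ContDiffOn ℝ 2 μ (Set.Icc 0 1))
    (h1 : μ 1 ≠ 0)
    (a ν : ℝ) (ha : 0 < a) (hν : 0 < ν)
    (hasymp : Tendsto (fun α : ℝ => μ α / (a * α ^ ν))
      (nhdsWithin 0 (Set.Ioi 0)) (nhds 1))
    (lam : ℝ) (hlam : lam < 0)
    (u : ℝ → ℝ) (hu : ContinuousOn u (Set.Ioi 0))
    (hloc : LocallyIntegrableOn u (Set.Ioi 0))
    (hlap : ∀ p : ℝ, 0 < p →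
      IntegrableOn (fun t : ℝ => Real.exp (-p * t) * u t) (Set.Ioi 0) ∧
      ∫ t in Set.Ioi (0:ℝ), Real.exp (-p * t) * u t
        = Kreal μ p / (p * Kreal μ p - lam)) :
    Tendsto (fun t : ℝ => (Real.log t) ^ (1 + ν) * u t) atTop
      (nhds (a * Real.Gamma (1 + ν) / (-lam))) := by
  have hK : ∀ p, Kreal μ p = Gint μ 1 p := fun p => rfl
  have hB : ∀ p : ℝ, 0 < p → p * Kreal μ p = Gint μ 0 p := by
    intro p hp
    simp only [Kreal, Gint]
    rw [← intervalIntegral.integral_const_mul]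
    congr 1
    funext α
    rw [sub_zero, ← mul_assoc, Real.rpow_sub_one hp.ne']
    field_simp
  have hB0 : ∀ p : ℝ, 0 < p → 0 ≤ Gint μ 0 p := by
    intro p hp
    exact intervalIntegral.integral_nonneg zero_le_one
      (fun α hα => mul_nonneg (Real.rpow_nonneg hp.le _) (hnn α hα))
  have hw : ContinuousOn (fun α => α * μ α) (Icc 0 1) := by fun_prop
  have hw0 : ∀ α ∈ Icc (0:ℝ) 1, 0 ≤ α * μ α := fun α hα => mul_nonneg hα.1 (hnn α hα)
  have hBd : ∀ p : ℝ, 0 < p → HasDerivAt (Gint μ 0) (Gint (fun α => α * μ α) 1 p) p := by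
    intro p hp
    simpa using Gint_hasDerivAt hc 0 hp
  have hc0 : 0 < -lam := by linarith
  have hg := inv_CMon hc0 hB0 hBd (fun n => Gint_CMon n hw hw0 le_rfl)
  let F : ℝ → ℝ := fun p => Kreal μ p / (p * Kreal μ p - lam)
  have hFc : ∀ n, CMon n F := fun n =>
    ((Gint_CMon n hc hnn le_rfl).mul (hg n)).congr fun p hp => by
      simp only [F]
      rw [hB p hp, hK, div_eq_mul_inv]
      congr 2
      ring
  have hqF : ∀ p : ℝ, 0 < p → p * F p = Gint μ 0 p / (-lam + Gint μ 0 p) := by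
    intro p hp
    simp only [F]
    rw [← mul_div_assoc, hB p hp]
    congr 1
    ring
  have hqF2 : ∀ p : ℝ, 0 < p → p * F p = 1 - (-lam) * (-lam + Gint μ 0 p)⁻¹ := by
    intro p hp
    have : -lam + Gint μ 0 p ≠ 0 := by linarith [hB0 p hp]
    rw [hqF p hp]
    field_simp
    ring
  obtain ⟨hu0, hua⟩ := u_nonneg_antitone (F := F) (D := fun p => (-lam) *
      (Gint (fun α => α * μ α) 1 p * ((-lam + Gint μ 0 p)⁻¹ * (-lam + Gint μ 0 p)⁻¹))) hu hlap hFc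
    (by
      intro q hq
      have hne : -lam + Gint μ 0 q ≠ 0 := by linarith [hB0 q hq]
      have h := ((((hBd q hq).const_add (-lam)).inv hne).const_mul (-lam)).const_sub 1
      refine (h.congr_deriv ?_).congr_of_eventuallyEq ?_
      · field_simp
      · filter_upwards [lt_mem_nhds hq] with p hp using hqF2 p hp)
    (fun n => (CMon.const hc0.le).mul ((Gint_CMon n hw hw0 le_rfl).mul ((hg n).mul (hg n))))
  refine main_taub (F := F) hν hlap hu0 hua ?_
  have hW := watson hc ha hν hasymp
  have hBe : ∀ l : ℝ, ∫ α in (0:ℝ)..1, Real.exp (-(l * α)) * μ α = Gint μ 0 (Real.exp (-l)) := by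
    intro l
    simp only [Gint, sub_zero]
    congr 1
    funext α
    rw [← Real.exp_mul, neg_mul]
  simp only [hBe] at hW
  have hinv : Tendsto (fun l : ℝ => (l ^ (1 + ν))⁻¹) atTop (nhds 0) :=
    (tendsto_rpow_atTop (by linarith : 0 < 1 + ν)).inv_tendsto_atTop
  have hB1 : Tendsto (fun l : ℝ => Gint μ 0 (Real.exp (-l))) atTop (nhds 0) := by
    have := hW.mul hinv
    rw [mul_zero] at this
    refine this.congr' ?_
    filter_upwards [eventually_gt_atTop 0] with l hl
    have := Real.rpow_pos_of_pos hl (1 + ν)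
    field_simp
  have hlim := hW.div (hB1.const_add (-lam)) (by linarith)
  rw [add_zero] at hlim
  refine hlim.congr fun l => ?_
  rw [hqF _ (Real.exp_pos _), Pi.div_apply, mul_div_assoc]
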